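/- arXiv:cs/0207064 — 2 statements merged into one kernel-verified Lean document; each statement's English description precedes it below -/
import Mathlib

section
/- Let T₁ and T₂ be sets of propositional formulas and let P, Q ⊆ L(T₁) ∪ L(T₂) be sets of variables with P ⊆ L(T₁). Let γ be a set of formulas logically equivalent to Cn^{L(T₁) ∩ L(T₂)}(T₂). Then for every formula φ ∈ 𝓛(T₁), if Circ[T₁ ∪ T₂;P;Q] ⊨ φ, then Circ[T₁ ∪ γ;P;Q] ⊨ φ. -/
namespace NMR

/-- Propositional formulas over a variable type `V`. -/
inductive PropForm (V : Type*) : Type _ where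
  | var : V → PropForm V
  | tru : PropForm V
  | fls : PropForm V
  | neg : PropForm V → PropForm V
  | conj : PropForm V → PropForm V → PropForm V
  | disj : PropForm V → PropForm V → PropForm V
  | impl : PropForm V → PropForm V → PropForm V

variable {V : Type*}

/-- Truth value of a formula under a valuation. -/
def PropForm.eval (ν : V → Bool) : PropForm V → Bool
  | .var v => ν v
  | .tru => true
  | .fls => false
  | .neg φ => !(φ.eval ν)
  | .conj φ ψ => φ.eval ν && ψ.eval ν
  | .disj φ ψ => φ.eval ν || ψ.eval ν
  | .impl φ ψ => !(φ.eval ν) || ψ.eval ν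

/-- The set of variables occurring in a formula. -/
def PropForm.vars : PropForm V → Set V
  | .var v => {v}
  | .tru => ∅
  | .fls => ∅
  | .neg φ => φ.vars
  | .conj φ ψ => φ.vars ∪ ψ.vars
  | .disj φ ψ => φ.vars ∪ ψ.vars
  | .impl φ ψ => φ.vars ∪ ψ.vars

/-- `ν ⊨ φ`. -/
def Sat (ν : V → Bool) (φ : PropForm V) : Prop := φ.eval ν = true

/-- `ν ⊨ T` for a set of formulas. -/
def SatSet (ν : V → Bool) (T : Set (PropForm V)) : Prop := ∀ φ ∈ T, Sat ν φ

/-- `T ⊨ φ`. -/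
def Entails (T : Set (PropForm V)) (φ : PropForm V) : Prop :=
  ∀ ν : V → Bool, SatSet ν T → Sat ν φ

/-- `T ⊨ Γ` for a set `Γ`. -/
def EntailsSet (T Γ : Set (PropForm V)) : Prop := ∀ φ ∈ Γ, Entails T φ

/-- A tautology is satisfied by every valuation. -/
def Tautology (φ : PropForm V) : Prop := ∀ ν : V → Bool, Sat ν φ

/-- `L(T)`: the set of variables occurring in a set of formulas. -/
def varsOf (T : Set (PropForm V)) : Set V := ⋃ φ ∈ T, φ.vars

/-- `𝓛(S)`: the set of formulas all of whose variables lie in `S`. -/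
def FormsOver (S : Set V) : Set (PropForm V) := {φ | φ.vars ⊆ S}

/-- `Cn^S(T)`: the formulas in `𝓛(S)` entailed by `T`. -/
def Cn (S : Set V) (T : Set (PropForm V)) : Set (PropForm V) :=
  {φ | φ.vars ⊆ S ∧ Entails T φ}

/-- Two sets of formulas are logically equivalent iff they have the same models. -/
def EquivTheories (T T' : Set (PropForm V)) : Prop :=
  ∀ ν : V → Bool, SatSet ν T ↔ SatSet ν T'

/-- `ν ≤_{P,Q} ν'`. -/
def circLe (P Q : Set V) (ν ν' : V → Bool) : Prop :=
  (∀ x, x ∉ P ∪ Q → ν x = ν' x) ∧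
    {x | x ∈ P ∧ ν x = true} ⊆ {x | x ∈ P ∧ ν' x = true}

/-- `ν <_{P,Q} ν'`. -/
def circLt (P Q : Set V) (ν ν' : V → Bool) : Prop :=
  circLe P Q ν ν' ∧ {x | x ∈ P ∧ ν x = true} ⊂ {x | x ∈ P ∧ ν' x = true}

/-- `ν` is a model of `Circ[T;P;Q]`. -/
def CircModel (T : Set (PropForm V)) (P Q : Set V) (ν : V → Bool) : Prop :=
  SatSet ν T ∧ ¬ ∃ ν' : V → Bool, SatSet ν' T ∧ circLt P Q ν' ν

/-- `Circ[T;P;Q] ⊨ φ`. -/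
def CircEntails (T : Set (PropForm V)) (P Q : Set V) (φ : PropForm V) : Prop :=
  ∀ ν : V → Bool, CircModel T P Q ν → Sat ν φ

/-!
By compactness, a valuation satisfies `Cn^S(T)` exactly when it agrees on `S` with some model of
`T`: passing from `T` to `Cn^S(T)` forgets the values outside `S`. Models of `T₁` and of `T₂` that
agree on the common variables can be glued, so `T₁ ∪ γ` is equivalent to `Cn^{L(T₁)}(T₁ ∪ T₂)`.
It remains to see that forgetting the variables outside some `S ⊇ P` preserves circumscriptive
consequences over `S`. If `ν` is a minimal model of `Cn^S(T)`, then a model of `T` agreeing with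
`ν` on `S` is again minimal, since any smaller model of `T`, overwritten with `ν` outside `S`,
would be a model of `Cn^S(T)` smaller than `ν`.
-/

open Set

variable {T T' T₁ T₂ γ : Set (PropForm V)} {S S₁ S₂ P Q : Set V} {φ : PropForm V}
  {ν μ σ : V → Bool}

theorem PropForm.eval_congr (h : EqOn ν μ φ.vars) : φ.eval ν = φ.eval μ := by
  induction φ with
  | var v => exact h rfl
  | tru => rfl
  | fls => rfl
  | neg φ ih => simp only [eval, ih h]
  | conj φ ψ ihφ ihψ | disj φ ψ ihφ ihψ | impl φ ψ ihφ ihψ =>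
    obtain ⟨hφ, hψ⟩ := eqOn_union.1 h
    simp only [eval, ihφ hφ, ihψ hψ]

theorem PropForm.continuous_eval (φ : PropForm V) : Continuous fun ν : V → Bool => φ.eval ν := by
  induction φ with
  | var v => exact continuous_apply v
  | tru | fls => exact continuous_const
  | neg φ ih => exact (continuous_of_discreteTopology (f := not)).comp ih
  | conj φ ψ ihφ ihψ =>
    exact (continuous_of_discreteTopology (f := Function.uncurry and)).comp (ihφ.prodMk ihψ)
  | disj φ ψ ihφ ihψ =>
    exact (continuous_of_discreteTopology (f := Function.uncurry or)).comp (ihφ.prodMk ihψ)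
  | impl φ ψ ihφ ihψ =>
    exact (continuous_of_discreteTopology (f := fun p : Bool × Bool => !p.1 || p.2)).comp
      (ihφ.prodMk ihψ)

theorem sat_congr (hφ : φ ∈ FormsOver S) (h : EqOn ν μ S) : Sat ν φ ↔ Sat μ φ := by
  simp only [Sat, PropForm.eval_congr (h.mono hφ)]

theorem satSet_congr (hT : T ⊆ FormsOver S) (h : EqOn ν μ S) : SatSet ν T ↔ SatSet μ T :=
  forall₂_congr fun _ hφ => sat_congr (hT hφ) h

theorem sat_neg : Sat ν (.neg φ) ↔ ¬ Sat ν φ := by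
  simp only [Sat, PropForm.eval, Bool.not_eq_true', Bool.not_eq_true]

theorem satSet_union : SatSet ν (T ∪ T') ↔ SatSet ν T ∧ SatSet ν T' := by
  simp only [SatSet, mem_union, or_imp, forall_and]

theorem subset_formsOver_varsOf (T : Set (PropForm V)) : T ⊆ FormsOver (varsOf T) :=
  fun _ hφ => subset_biUnion_of_mem hφ

theorem isClosed_setOf_satSet (T : Set (PropForm V)) : IsClosed {ν | SatSet ν T} := by
  simp only [SatSet, Sat, ofPred_forall]
  exact isClosed_biInter fun φ _ => isClosed_eq φ.continuous_eval continuous_const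

theorem exists_formsOver_sat_iff_eqOn {F : Set V} (hF : F.Finite) (ν : V → Bool) :
    ∃ χ ∈ FormsOver F, ∀ μ, Sat μ χ ↔ EqOn μ ν F := by
  induction F, hF using Set.Finite.induction_on with
  | empty => exact ⟨.tru, Subset.rfl, fun μ => iff_of_true rfl (eqOn_empty μ ν)⟩
  | @insert x F _ _ ih =>
    obtain ⟨χ, hχF, hχ⟩ := ih
    obtain ⟨l, hlx, hl⟩ : ∃ l : PropForm V, l.vars = {x} ∧ ∀ μ, Sat μ l ↔ μ x = ν x := by
      cases hx : ν x with
      | true => exact ⟨.var x, rfl, fun μ => Iff.rfl⟩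
      | false => exact ⟨.neg (.var x), rfl, fun μ => sat_neg.trans (Bool.not_eq_true _).to_iff⟩
    refine ⟨.conj l χ, ?_, fun μ => ?_⟩
    · exact union_subset_union hlx.subset hχF
    · calc Sat μ (.conj l χ) ↔ Sat μ l ∧ Sat μ χ := Bool.and_eq_true_iff
        _ ↔ μ x = ν x ∧ EqOn μ ν F := and_congr (hl μ) (hχ μ)
        _ ↔ EqOn μ ν (insert x F) := by
          simp only [EqOn, mem_insert_iff, forall_eq_or_imp]

theorem exists_satSet_eqOn_of_finite {F : Set V} (hF : F.Finite) (hν : SatSet ν (Cn F T)) :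
    ∃ μ, SatSet μ T ∧ EqOn μ ν F := by
  obtain ⟨χ, hχF, hχ⟩ := exists_formsOver_sat_iff_eqOn hF ν
  by_contra! hne
  have hneg : Sat ν (.neg χ) :=
    hν _ ⟨hχF, fun μ hμ => sat_neg.2 ((hχ μ).not.2 (hne μ hμ))⟩
  exact sat_neg.1 hneg ((hχ ν).2 (eqOn_refl ν F))

theorem exists_satSet_eqOn_of_forall_finite
    (h : ∀ F ⊆ S, F.Finite → ∃ μ, SatSet μ T ∧ EqOn μ ν F) : ∃ μ, SatSet μ T ∧ EqOn μ ν S := by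
  obtain ⟨μ, hμT, hμ⟩ := (isClosed_setOf_satSet T).isCompact.inter_iInter_nonempty
    (fun x : S => {μ | μ x = ν x})
    (fun x => isClosed_eq (continuous_apply _) continuous_const) fun u => by
      obtain ⟨μ, hμT, hμ⟩ := h ((↑) '' (u : Set S)) (Subtype.coe_image_subset S _)
        (u.finite_toSet.image _)
      exact ⟨μ, hμT, mem_iInter₂.2 fun x hx => hμ (mem_image_of_mem _ hx)⟩
  exact ⟨μ, hμT, fun x hx => mem_iInter.1 hμ ⟨x, hx⟩⟩

theorem satSet_cn_iff : SatSet ν (Cn S T) ↔ ∃ μ, SatSet μ T ∧ EqOn μ ν S := by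
  constructor
  · intro hν
    exact exists_satSet_eqOn_of_forall_finite fun F hFS hF =>
      exists_satSet_eqOn_of_finite hF fun φ hφ => hν φ ⟨hφ.1.trans hFS, hφ.2⟩
  · rintro ⟨μ, hμT, hμν⟩ φ ⟨hφS, hφ⟩
    exact (sat_congr hφS hμν).1 (hφ μ hμT)

theorem exists_eqOn_eqOn_of_eqOn_inter {α β : Type*} {s t : Set α} {f g : α → β}
    (h : EqOn f g (s ∩ t)) : ∃ k, EqOn k f s ∧ EqOn k g t := by
  classical
  refine ⟨s.piecewise f g, piecewise_eqOn s f g, fun x hxt => ?_⟩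
  by_cases hxs : x ∈ s
  · rw [piecewise_eq_of_mem _ _ _ hxs, h ⟨hxs, hxt⟩]
  · exact piecewise_eq_of_notMem _ _ _ hxs

theorem equivTheories_cn_union (hT₁ : T₁ ⊆ FormsOver S₁) (hT₂ : T₂ ⊆ FormsOver S₂) :
    EquivTheories (Cn S₁ (T₁ ∪ T₂)) (T₁ ∪ Cn (S₁ ∩ S₂) T₂) := by
  intro ν
  simp only [satSet_union, satSet_cn_iff]
  constructor
  · rintro ⟨σ, ⟨hσ₁, hσ₂⟩, hσν⟩
    exact ⟨(satSet_congr hT₁ hσν).1 hσ₁, σ, hσ₂, hσν.mono inter_subset_left⟩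
  · rintro ⟨hν, μ, hμ, hμν⟩
    obtain ⟨σ, hσν, hσμ⟩ := exists_eqOn_eqOn_of_eqOn_inter hμν.symm
    exact ⟨σ, ⟨(satSet_congr hT₁ hσν).2 hν, (satSet_congr hT₂ hσμ).2 hμ⟩, hσν⟩

theorem setOf_mem_and_eq_true_congr (h : EqOn ν μ P) :
    {x | x ∈ P ∧ ν x = true} = {x | x ∈ P ∧ μ x = true} :=
  ext fun _ => and_congr_right fun hx => by rw [h hx]

theorem circLt.piecewise [DecidablePred (· ∈ S)] (h : circLt P Q μ σ) (hσ : EqOn σ ν S)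
    (hP : P ⊆ S) : circLt P Q (S.piecewise μ ν) ν := by
  obtain ⟨⟨hfix, -⟩, hlt⟩ := h
  rw [← setOf_mem_and_eq_true_congr ((piecewise_eqOn S μ ν).mono hP),
    setOf_mem_and_eq_true_congr (hσ.mono hP)] at hlt
  refine ⟨⟨fun x hx => ?_, hlt.subset⟩, hlt⟩
  by_cases hxS : x ∈ S
  · rw [piecewise_eq_of_mem _ _ _ hxS, hfix x hx, hσ hxS]
  · exact piecewise_eq_of_notMem _ _ _ hxS

theorem circModel_congr (h : EquivTheories T T') : CircModel T P Q ν ↔ CircModel T' P Q ν := by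
  simp only [CircModel, h _]

theorem circEntails_congr (h : EquivTheories T T') : CircEntails T P Q φ ↔ CircEntails T' P Q φ :=
  forall_congr' fun _ => imp_congr_left (circModel_congr h)

theorem CircModel.of_cn (hν : CircModel (Cn S T) P Q ν) (hP : P ⊆ S) (hσT : SatSet σ T)
    (hσ : EqOn σ ν S) : CircModel T P Q σ := by
  classical
  refine ⟨hσT, fun ⟨μ, hμT, hμσ⟩ => hν.2 ⟨S.piecewise μ ν, ?_, hμσ.piecewise hσ hP⟩⟩
  exact satSet_cn_iff.2 ⟨μ, hμT, (piecewise_eqOn S μ ν).symm⟩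

theorem CircEntails.cn (h : CircEntails T P Q φ) (hP : P ⊆ S) (hφ : φ ∈ FormsOver S) :
    CircEntails (Cn S T) P Q φ := by
  intro ν hν
  obtain ⟨σ, hσT, hσ⟩ := satSet_cn_iff.1 hν.1
  exact (sat_congr hφ hσ).1 (h σ (hν.of_cn hP hσT hσ))

theorem circ_T_gamma_general (hT₁ : T₁ ⊆ FormsOver S₁) (hT₂ : T₂ ⊆ FormsOver S₂) (hP : P ⊆ S₁)
    (hγ : EquivTheories γ (Cn (S₁ ∩ S₂) T₂)) :
    ∀ φ ∈ FormsOver S₁, CircEntails (T₁ ∪ T₂) P Q φ → CircEntails (T₁ ∪ γ) P Q φ := by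
  intro φ hφ h
  have hequiv : EquivTheories (Cn S₁ (T₁ ∪ T₂)) (T₁ ∪ γ) := fun ν => by
    rw [equivTheories_cn_union hT₁ hT₂ ν, satSet_union, satSet_union, hγ ν]
  exact (circEntails_congr hequiv).1 (h.cn hP hφ)

/-- replacing `T₂` by `γ ≡ Cn^{L(T₁) ∩ L(T₂)}(T₂)` preserves
circumscriptive consequences in `𝓛(T₁)`. -/
theorem circ_T_gamma {V : Type*} (T₁ T₂ γ : Set (PropForm V)) (P Q : Set V)
    (hPQ : P ∪ Q ⊆ varsOf T₁ ∪ varsOf T₂) (hP : P ⊆ varsOf T₁)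
    (hγ : EquivTheories γ (Cn (varsOf T₁ ∩ varsOf T₂) T₂)) :
    ∀ φ ∈ FormsOver (varsOf T₁),
      CircEntails (T₁ ∪ T₂) P Q φ → CircEntails (T₁ ∪ γ) P Q φ :=
  circ_T_gamma_general (subset_formsOver_varsOf T₁) (subset_formsOver_varsOf T₂) hP hγ

end NMR
end

section
/- Let ⟨W, D⟩ be a propositional default theory over a finite variable set and φ a propositional formula. If W |~_D φ, then there is a formula γ ∈ 𝓛(W ∪ D) ∩ 𝓛(φ) such that W |~_D γ and {γ} |~_D φ. -/
namespace NMR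

variable {V : Type*}

/-- A Reiter default: prerequisite, a finite nonempty set of justifications,
and a consequent. -/
structure Default (V : Type*) where
  pre : PropForm V
  just : Set (PropForm V)
  just_finite : just.Finite
  just_nonempty : just.Nonempty
  cons : PropForm V

/-- All propositional consequences of `T`. -/
def CnAll (T : Set (PropForm V)) : Set (PropForm V) := {φ | Entails T φ}

/-- The closure conditions defining `Γ(S₀)` for the default theory `⟨W, D⟩`:
`W ⊆ S`, `Cn(S) = S`, and closure under the defaults applicable w.r.t. `S₀`. -/
def DLClosed (W : Set (PropForm V)) (D : Set (Default V)) (S₀ S : Set (PropForm V)) : Prop :=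
  W ⊆ S ∧ CnAll S = S ∧
    ∀ d ∈ D, d.pre ∈ S → (∀ β ∈ d.just, PropForm.neg β ∉ S₀) → d.cons ∈ S

/-- `Γ(S₀)`: the least set satisfying the closure conditions (the intersection
of all such sets, which is itself such a set). -/
def GammaOp (W : Set (PropForm V)) (D : Set (Default V)) (S₀ : Set (PropForm V)) :
    Set (PropForm V) := ⋂₀ {S | DLClosed W D S₀ S}

/-- `E` is an extension of `⟨W, D⟩` iff `Γ(E) = E`. -/
def IsExtension (W : Set (PropForm V)) (D : Set (Default V)) (E : Set (PropForm V)) : Prop :=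
  GammaOp W D E = E

/-- Cautious entailment `W |~_D φ`. -/
def Cautious (W : Set (PropForm V)) (D : Set (Default V)) (φ : PropForm V) : Prop :=
  ∀ E : Set (PropForm V), IsExtension W D E → φ ∈ E

/-- Brave entailment `W |~^b_D φ`. -/
def Brave (W : Set (PropForm V)) (D : Set (Default V)) (φ : PropForm V) : Prop :=
  ∃ E : Set (PropForm V), IsExtension W D E ∧ φ ∈ E

/-- `L(D)`: the variables occurring in prerequisites, justifications or
consequents of defaults in `D`. -/
def varsD (D : Set (Default V)) : Set V :=
  ⋃ d ∈ D, (d.pre.vars ∪ (⋃ β ∈ d.just, PropForm.vars β) ∪ d.cons.vars)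

/-!
An extension of `⟨W, D⟩` is generated, as a deductively closed set, by those of its members that lie
in `W` or are consequents of defaults in `D`: their consequences already satisfy the closure
conditions of which the extension is the least solution. Hence `φ` follows from a part of each
extension written in the variables `S` of `W` and of these consequents. Quantifying `φ` universally
over its finitely many variables outside `S` gives a formula that entails `φ` and follows from every
theory over `S` that entails `φ`. Being determined by `S` and `φ` alone, it serves all extensions
at once.
-/

section Semantics

theorem sat_congr_s10 {φ : PropForm V} {ν ν' : V → Bool} (h : Set.EqOn ν ν' φ.vars) :
    Sat ν φ ↔ Sat ν' φ := by
  suffices φ.eval ν = φ.eval ν' by rw [Sat, Sat, this]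
  induction φ with
  | var v => exact h rfl
  | tru | fls => rfl
  | neg φ ih => simp only [PropForm.eval, ih h]
  | conj φ ψ ihφ ihψ | disj φ ψ ihφ ihψ | impl φ ψ ihφ ihψ =>
    obtain ⟨hφ, hψ⟩ := Set.eqOn_union.1 h
    simp only [PropForm.eval, ihφ hφ, ihψ hψ]

theorem SatSet.congr {T : Set (PropForm V)} {ν ν' : V → Bool} (hT : SatSet ν T)
    (h : Set.EqOn ν ν' (varsOf T)) : SatSet ν' T :=
  fun φ hφ => (sat_congr_s10 (h.mono (Set.subset_biUnion_of_mem hφ))).1 (hT φ hφ)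

theorem entails_singleton {φ ψ : PropForm V} : Entails {φ} ψ ↔ ∀ ν, Sat ν φ → Sat ν ψ := by
  simp [Entails, SatSet]

theorem entails_of_mem {T : Set (PropForm V)} {φ : PropForm V} (hφ : φ ∈ T) : Entails T φ :=
  fun _ hν => hν φ hφ

theorem EntailsSet.trans_entails {T Γ : Set (PropForm V)} {φ : PropForm V} (hΓ : EntailsSet T Γ)
    (hφ : Entails Γ φ) : Entails T φ :=
  fun ν hν => hφ ν fun ψ hψ => hΓ ψ hψ ν hν

theorem Entails.mono {T T' : Set (PropForm V)} {φ : PropForm V} (hφ : Entails T φ) (h : T ⊆ T') :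
    Entails T' φ :=
  EntailsSet.trans_entails (fun _ hψ => entails_of_mem (h hψ)) hφ

theorem cnAll_eq_self_iff {T : Set (PropForm V)} : CnAll T = T ↔ ∀ φ, Entails T φ → φ ∈ T :=
  ⟨fun h _ hφ => h.subset hφ, fun h => Set.Subset.antisymm h fun _ => entails_of_mem⟩

theorem cnAll_cnAll (T : Set (PropForm V)) : CnAll (CnAll T) = CnAll T :=
  cnAll_eq_self_iff.2 fun _ => EntailsSet.trans_entails fun _ hψ => hψ

theorem varsOf_mono {T T' : Set (PropForm V)} (h : T ⊆ T') : varsOf T ⊆ varsOf T' :=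
  Set.biUnion_subset_biUnion_left h

end Semantics

section UniformInterpolation

namespace PropForm

theorem finite_vars (φ : PropForm V) : φ.vars.Finite := by
  induction φ with
  | var v => exact Set.finite_singleton v
  | tru | fls => exact Set.finite_empty
  | neg _ ih => exact ih
  | conj φ ψ ihφ ihψ | disj φ ψ ihφ ihψ | impl φ ψ ihφ ihψ => exact ihφ.union ihψ

/-- Simultaneous substitution of the formulas `σ v` for the variables `v`. -/
def subst {U : Type*} (σ : V → PropForm U) : PropForm V → PropForm U
  | var v => σ v
  | tru => tru
  | fls => fls
  | neg φ => neg (φ.subst σ)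
  | conj φ ψ => conj (φ.subst σ) (ψ.subst σ)
  | disj φ ψ => disj (φ.subst σ) (ψ.subst σ)
  | impl φ ψ => impl (φ.subst σ) (ψ.subst σ)

theorem eval_subst {U : Type*} (σ : V → PropForm U) (φ : PropForm V) (ν : U → Bool) :
    (φ.subst σ).eval ν = φ.eval fun v => (σ v).eval ν := by
  induction φ with
  | var | tru | fls => rfl
  | neg φ ih => simp only [subst, eval, ih]
  | conj φ ψ ihφ ihψ | disj φ ψ ihφ ihψ | impl φ ψ ihφ ihψ => simp only [subst, eval, ihφ, ihψ]

theorem vars_subst {U : Type*} (σ : V → PropForm U) (φ : PropForm V) :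
    (φ.subst σ).vars = ⋃ v ∈ φ.vars, (σ v).vars := by
  induction φ with
  | var v => simp only [subst, vars, Set.biUnion_singleton]
  | tru | fls => simp only [subst, vars, Set.biUnion_empty]
  | neg _ ih => exact ih
  | conj φ ψ ihφ ihψ | disj φ ψ ihφ ihψ | impl φ ψ ihφ ihψ =>
    simp only [subst, vars, ihφ, ihψ, Set.biUnion_union]

/-- The truth constant `⊤` or `⊥` with the given truth value. -/
def ofBool (b : Bool) : PropForm V := if b then tru else fls

theorem eval_ofBool (b : Bool) (ν : V → Bool) : (ofBool b).eval ν = b := by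
  cases b <;> rfl

theorem vars_ofBool (b : Bool) : (ofBool b : PropForm V).vars = ∅ := by
  cases b <;> rfl

/-- The formula `φ[v := b]`. -/
def inst [DecidableEq V] (v : V) (b : Bool) (φ : PropForm V) : PropForm V :=
  φ.subst (Function.update var v (ofBool b))

theorem sat_inst [DecidableEq V] {v : V} {b : Bool} {φ : PropForm V} {ν : V → Bool} :
    Sat ν (φ.inst v b) ↔ Sat (Function.update ν v b) φ := by
  have hν : (fun w => (Function.update var v (ofBool b) w).eval ν) = Function.update ν v b := by
    ext w
    by_cases hw : w = v
    · subst hw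
      simp only [Function.update_self, eval_ofBool]
    · simp only [Function.update_of_ne hw, eval]
  rw [Sat, Sat, inst, eval_subst, hν]

theorem vars_inst_subset [DecidableEq V] (v : V) (b : Bool) (φ : PropForm V) :
    (φ.inst v b).vars ⊆ φ.vars \ {v} := by
  rw [inst, vars_subst]
  refine Set.iUnion₂_subset fun w hw => ?_
  by_cases hwv : w = v
  · simp only [hwv, Function.update_self, vars_ofBool, Set.empty_subset]
  · rw [Function.update_of_ne hwv]
    exact Set.singleton_subset_iff.2 ⟨hw, hwv⟩

/-- The quantified Boolean formula `∀ v, φ`, as the propositional formula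
`φ[v := ⊤] ∧ φ[v := ⊥]`. -/
def all [DecidableEq V] (v : V) (φ : PropForm V) : PropForm V :=
  conj (φ.inst v true) (φ.inst v false)

theorem vars_all_subset [DecidableEq V] (v : V) (φ : PropForm V) : (φ.all v).vars ⊆ φ.vars \ {v} :=
  Set.union_subset (vars_inst_subset v true φ) (vars_inst_subset v false φ)

theorem sat_all [DecidableEq V] {v : V} {φ : PropForm V} {ν : V → Bool} :
    Sat ν (φ.all v) ↔ ∀ b, Sat (Function.update ν v b) φ := by
  have h : Sat ν (φ.all v) ↔ Sat ν (φ.inst v true) ∧ Sat ν (φ.inst v false) :=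
    Bool.and_eq_true_iff
  rw [h, sat_inst, sat_inst, Bool.forall_bool, and_comm]

end PropForm

theorem forall_eqOn_compl_insert_iff {β : Type*} [DecidableEq V] {p : (V → β) → Prop} {a : V}
    {T : Set V} {ν : V → β} :
    (∀ ν', Set.EqOn ν' ν (insert a T)ᶜ → p ν') ↔
      ∀ b ν', Set.EqOn ν' (Function.update ν a b) Tᶜ → p ν' := by
  constructor
  · intro h b ν' hν'
    refine h ν' fun x hx => ?_
    obtain ⟨hxa, hxT⟩ := not_or.1 hx
    rw [hν' hxT, Function.update_of_ne hxa]
  · intro h ν' hν'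
    refine h (ν' a) ν' fun x hxT => ?_
    by_cases hxa : x = a
    · rw [hxa, Function.update_self]
    · rw [Function.update_of_ne hxa, hν' (not_or.2 ⟨hxa, hxT⟩)]

theorem exists_sat_iff_forall_eqOn_compl {T : Set V} (hT : T.Finite) (φ : PropForm V) :
    ∃ γ : PropForm V, γ.vars ⊆ φ.vars \ T ∧
      ∀ ν, Sat ν γ ↔ ∀ ν', Set.EqOn ν' ν Tᶜ → Sat ν' φ := by
  classical
  induction T, hT using Set.Finite.induction_on with
  | empty => exact ⟨φ, by simp, fun ν => by simp [Set.eqOn_univ]⟩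
  | @insert a T _ _ ih =>
    obtain ⟨γ, hvars, hγ⟩ := ih
    refine ⟨γ.all a, fun x hx => ?_, fun ν => ?_⟩
    · obtain ⟨hxγ, hxa⟩ := PropForm.vars_all_subset a γ hx
      obtain ⟨hxφ, hxT⟩ := hvars hxγ
      exact ⟨hxφ, not_or.2 ⟨hxa, hxT⟩⟩
    · simp only [PropForm.sat_all, hγ, forall_eqOn_compl_insert_iff]

theorem exists_uniform_interpolant (S : Set V) (φ : PropForm V) :
    ∃ γ : PropForm V, γ.vars ⊆ S ∩ φ.vars ∧ Entails {γ} φ ∧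
      ∀ T, varsOf T ⊆ S → Entails T φ → Entails T γ := by
  obtain ⟨γ, hvars, hγ⟩ := exists_sat_iff_forall_eqOn_compl (φ.finite_vars.sdiff (t := S)) φ
  refine ⟨γ, fun x hx => ?_, ?_, fun T hT hφ ν hν => ?_⟩
  · obtain ⟨hxφ, hx⟩ := hvars hx
    exact ⟨by_contra fun hxS => hx ⟨hxφ, hxS⟩, hxφ⟩
  · exact entails_singleton.2 fun ν hν => (hγ ν).1 hν ν (Set.eqOn_refl ν _)
  · refine (hγ ν).2 fun ν' hν' => hφ ν' (hν.congr fun x hx => ?_)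
    exact (hν' fun hxφ => hxφ.2 (hT hx)).symm

end UniformInterpolation

section Extensions

variable {W : Set (PropForm V)} {D : Set (Default V)} {S₀ S E : Set (PropForm V)}
  {φ : PropForm V}

theorem DLClosed.mem_of_entails (hS : DLClosed W D S₀ S) (hφ : Entails S φ) : φ ∈ S :=
  cnAll_eq_self_iff.1 hS.2.1 φ hφ

theorem dlClosed_gammaOp (W : Set (PropForm V)) (D : Set (Default V)) (S₀ : Set (PropForm V)) :
    DLClosed W D S₀ (GammaOp W D S₀) := by
  refine ⟨Set.subset_sInter fun S hS => hS.1, cnAll_eq_self_iff.2 fun φ hφ S hS => ?_,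
    fun d hd hpre hjust S hS => hS.2.2 d hd (hpre S hS) hjust⟩
  exact hS.mem_of_entails (hφ.mono (Set.sInter_subset_of_mem hS))

theorem DLClosed.cnAll_inter (hS : DLClosed W D S₀ S) :
    DLClosed W D S₀ (CnAll (S ∩ (W ∪ Default.cons '' D))) := by
  refine ⟨fun w hw => entails_of_mem ⟨hS.1 hw, Or.inl hw⟩, cnAll_cnAll _,
    fun d hd hpre hjust => entails_of_mem ⟨?_, Or.inr (Set.mem_image_of_mem _ hd)⟩⟩
  have hpreS : d.pre ∈ S := hS.mem_of_entails (Entails.mono hpre Set.inter_subset_left)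
  exact hS.2.2 d hd hpreS hjust

theorem IsExtension.dlClosed (hE : IsExtension W D E) : DLClosed W D E E := by
  have hΓ : DLClosed W D E (GammaOp W D E) := dlClosed_gammaOp W D E
  rwa [hE] at hΓ

theorem IsExtension.subset_of_dlClosed (hE : IsExtension W D E) (hS : DLClosed W D E S) : E ⊆ S :=
  hE.superset.trans (Set.sInter_subset_of_mem hS)

theorem IsExtension.entails_inter_of_mem (hE : IsExtension W D E) (hφ : φ ∈ E) :
    Entails (E ∩ (W ∪ Default.cons '' D)) φ :=
  hE.subset_of_dlClosed hE.dlClosed.cnAll_inter hφ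

theorem Entails.cautious (h : Entails W φ) (D : Set (Default V)) : Cautious W D φ :=
  fun _ hE => hE.dlClosed.mem_of_entails (h.mono hE.dlClosed.1)

theorem varsOf_union_image_cons_subset (W : Set (PropForm V)) (D : Set (Default V)) :
    varsOf (W ∪ Default.cons '' D) ⊆ varsOf W ∪ varsD D := by
  rw [varsOf, Set.biUnion_union, Set.biUnion_image]
  exact Set.union_subset_union_right _
    (Set.iUnion₂_mono fun d _ => Set.subset_union_right)

end Extensions

theorem interpolation_cautious_dl_corollary_general {V : Type*}
    (W : Set (PropForm V)) (D : Set (Default V)) (φ : PropForm V)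
    (h : Cautious W D φ) :
    ∃ γ : PropForm V,
      γ.vars ⊆ varsOf (W ∪ Default.cons '' D) ∩ φ.vars ∧
      Cautious W D γ ∧
      Entails {γ} φ := by
  obtain ⟨γ, hvars, hγφ, hγ⟩ := exists_uniform_interpolant (varsOf (W ∪ Default.cons '' D)) φ
  refine ⟨γ, hvars, fun E hE => ?_, hγφ⟩
  have hEγ : Entails (E ∩ (W ∪ Default.cons '' D)) γ :=
    hγ _ (varsOf_mono Set.inter_subset_right) (hE.entails_inter_of_mem (h E hE))
  exact hE.dlClosed.mem_of_entails (hEγ.mono Set.inter_subset_left)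

/-- corollary of interpolation for cautious default logic. -/
theorem interpolation_cautious_dl_corollary {V : Type*} [Finite V]
    (W : Set (PropForm V)) (D : Set (Default V)) (φ : PropForm V)
    (h : Cautious W D φ) :
    ∃ γ : PropForm V,
      γ.vars ⊆ (varsOf W ∪ varsD D) ∩ φ.vars ∧
      Cautious W D γ ∧
      Cautious {γ} D φ := by
  obtain ⟨γ, hvars, hγ, hγφ⟩ := interpolation_cautious_dl_corollary_general W D φ h
  exact ⟨γ, hvars.trans (Set.inter_subset_inter_left _ (varsOf_union_image_cons_subset W D)), hγ,
    hγφ.cautious D⟩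

end NMR
end
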